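/- Let r ≥ 2 be an integer and let p, q ∈ ℤ. The characteristic polynomial of the (r−1)×(r−1) matrix C(p,q) is ∏_{k=1}^{r−1} (λ − 2 cos(d·kπ/r)), where d = gcd(p, q, 2r). -/

import Mathlib

open Complex Matrix

/-- `t = exp(iπ/(2r))`. -/
noncomputable def tconst (r : ℕ) : ℂ := Complex.exp (Real.pi * Complex.I / (2 * r))

/-- `ε(k,j) = 1` if `j ≡ k (mod 2r)`, `−1` if `j ≡ −k (mod 2r)`, `0` otherwise. -/
def eps (r : ℕ) (k j : ℤ) : ℤ :=
  if (2 * (r : ℤ)) ∣ (j - k) then 1 else if (2 * (r : ℤ)) ∣ (j + k) then -1 else 0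

/-- The matrix of the Weyl quantization of `2 cos 2π(px+qy)` in the basis `ζ_1, …, ζ_{r−1}`:
`C(p,q)_{k,m} = t^{−pq} (t^{2qm} ε(k, m−p) + t^{−2qm} ε(k, m+p))`, with indices shifted so that
the index `k : Fin (r-1)` corresponds to `k+1 ∈ {1, …, r−1}`. -/
noncomputable def Cmat (r : ℕ) (p q : ℤ) : Matrix (Fin (r - 1)) (Fin (r - 1)) ℂ :=
  Matrix.of fun k m =>
    tconst r ^ (-(p * q)) *
      (tconst r ^ (2 * q * ((m : ℤ) + 1)) * (eps r ((k : ℤ) + 1) (((m : ℤ) + 1) - p) : ℂ) +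
       tconst r ^ (-(2 * q * ((m : ℤ) + 1))) * (eps r ((k : ℤ) + 1) (((m : ℤ) + 1) + p) : ℂ))

/-- The quantized integer `[n] = sin(nπ/r)/sin(π/r)`. -/
noncomputable def qint (r : ℕ) (n : ℤ) : ℝ :=
  Real.sin (n * Real.pi / r) / Real.sin (Real.pi / r)

/-!
The Weyl operators `W(p,q)` act on functions on `ℤ/2r` and satisfy the Heisenberg relation
`W(p,q) W(p',q') = t^(pq' - qp') W(p+p', q+q')`. The odd functions are invariant under
`W(p,q) + W(-p,-q)`, and `C(p,q)` is its restriction to them. Hence `C(p,q)` is Hermitian, and the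
rescaled Chebyshev polynomials `2 T_n(x/2)` send `C(p,q)` to `C(np,nq)`.

If `R` is the reflection `f ↦ f(-·)`, the trace of `C(p,q)` is half that of
`(W(p,q) + W(-p,-q)) (1 - R)`, a character sum that only sees whether `2r`, respectively `2`,
divides both `p` and `q`. Therefore `C(np,nq)` and `C(0,nd)` have the same trace for every `n`,
where `d = gcd(p,q,2r)`. As the Chebyshev polynomials span all polynomials, every polynomial has
the same trace at `C(p,q)` as at `C(0,d)`, so these Hermitian matrices have the same eigenvalues,
and `C(0,d)` is diagonal.
-/

section PolynomialTraces

open Polynomial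

theorem map_univ_val_eq_of_sum_eval_eq {ι κ K : Type*} [Fintype ι] [Fintype κ] [Field K]
    [CharZero K] {a : ι → K} {b : κ → K}
    (h : ∀ P : K[X], ∑ i, P.eval (a i) = ∑ j, P.eval (b j)) :
    Finset.univ.val.map a = Finset.univ.val.map b := by
  classical
  ext x
  set s : Finset K := Finset.univ.image a ∪ Finset.univ.image b with hs
  set P : K[X] := Lagrange.interpolate s id (fun y ↦ if x = y then 1 else 0)
  have hP {y : K} (hy : y ∈ s) : P.eval y = if x = y then 1 else 0 :=
    Lagrange.eval_interpolate_at_node _ (Set.injOn_id _) hy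
  have hcount := h P
  rw [Finset.sum_congr rfl fun i _ ↦ hP (y := a i) (by simp [hs]),
    Finset.sum_congr rfl fun j _ ↦ hP (y := b j) (by simp [hs]),
    Finset.sum_boole, Finset.sum_boole] at hcount
  rw [Multiset.count_map, Multiset.count_map]
  exact_mod_cast hcount

variable {𝕜 m n : Type*} [RCLike 𝕜] [Fintype m] [DecidableEq m] [Fintype n] [DecidableEq n]

theorem trace_aeval_eq_sum_eigenvalues {A : Matrix n n 𝕜} (hA : A.IsHermitian) (P : 𝕜[X]) :
    (aeval A P).trace = ∑ i, P.eval (hA.eigenvalues i : 𝕜) := by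
  conv_lhs => rw [hA.spectral_theorem]
  rw [aeval_algHom_apply, Unitary.conjStarAlgAut_apply, Matrix.trace_mul_comm, ← mul_assoc,
    Unitary.coe_star_mul_self, one_mul, ← Matrix.diagonalAlgHom_apply (R := 𝕜),
    aeval_algHom_apply, Matrix.diagonalAlgHom_apply, Matrix.trace_diagonal]
  simp [aeval_fn_apply]

theorem charpoly_eq_of_trace_aeval_eq {A : Matrix m m 𝕜} {B : Matrix n n 𝕜}
    (hA : A.IsHermitian) (hB : B.IsHermitian)
    (h : ∀ P : 𝕜[X], (aeval A P).trace = (aeval B P).trace) : A.charpoly = B.charpoly := by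
  have hev := map_univ_val_eq_of_sum_eval_eq fun P ↦ by
    simpa only [trace_aeval_eq_sum_eigenvalues hA, trace_aeval_eq_sum_eigenvalues hB] using h P
  rw [hA.charpoly_eq, hB.charpoly_eq]
  have hprod := congrArg (fun s : Multiset 𝕜 ↦ (s.map fun x ↦ X - C x).prod) hev
  rwa [Multiset.map_map, Multiset.map_map] at hprod

theorem span_range_chebyshev_C (R : Type*) [CommRing R] [Invertible (2 : R)] :
    Submodule.span R (Set.range (Chebyshev.C R)) = ⊤ := by
  set V := Submodule.span R (Set.range (Chebyshev.C R))
  have mem (n : ℤ) : Chebyshev.C R n ∈ V := Submodule.subset_span ⟨n, rfl⟩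
  have X_mul_mem {P : R[X]} (hP : P ∈ V) : X * P ∈ V := by
    suffices V ≤ V.comap (LinearMap.mulLeft R X) from this hP
    refine Submodule.span_le.2 ?_
    rintro _ ⟨n, rfl⟩
    have hX : X * Chebyshev.C R n = Chebyshev.C R (n + 1) + Chebyshev.C R (n - 1) := by
      rw [Chebyshev.C_add_one]; ring
    simpa [hX] using V.add_mem (mem (n + 1)) (mem (n - 1))
  have one_mem : (1 : R[X]) ∈ V := by
    have h : ⅟(2 : R) • Chebyshev.C R 0 = 1 := by
      rw [Chebyshev.C_zero, ← Polynomial.C_ofNat, smul_C, smul_eq_mul, invOf_mul_self, C_1]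
    exact h ▸ V.smul_mem _ (mem 0)
  have X_pow_mem (k : ℕ) : (X : R[X]) ^ k ∈ V := by
    induction k with
    | zero => simpa using one_mem
    | succ k ih => simpa [pow_succ'] using X_mul_mem ih
  refine eq_top_iff.2 fun P _ ↦ ?_
  rw [P.as_sum_range_C_mul_X_pow]
  exact V.sum_mem fun k _ ↦ by simpa [smul_eq_C_mul] using V.smul_mem (P.coeff k) (X_pow_mem k)

theorem trace_aeval_eq_of_chebyshev_C {R : Type*} [CommRing R] [Invertible (2 : R)]
    {A : Matrix m m R} {B : Matrix n n R}
    (h : ∀ k : ℤ, (aeval A (Chebyshev.C R k)).trace = (aeval B (Chebyshev.C R k)).trace)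
    (P : R[X]) : (aeval A P).trace = (aeval B P).trace :=
  LinearMap.congr_fun
    (LinearMap.ext_on_range (f := traceLinearMap m R R ∘ₗ (aeval A).toLinearMap)
      (g := traceLinearMap n R R ∘ₗ (aeval B).toLinearMap) (span_range_chebyshev_C R) h) P

end PolynomialTraces

theorem tconst_ne_zero (r : ℕ) : tconst r ≠ 0 := Complex.exp_ne_zero _

theorem star_tconst_zpow (r : ℕ) (a : ℤ) : star (tconst r ^ a) = tconst r ^ (-a) := by
  have norm_eq_one : ‖tconst r‖ = 1 := by
    have h : (Real.pi * I / (2 * r) : ℂ) = (Real.pi / (2 * r) : ℝ) * I := by push_cast; ring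
    rw [tconst, h, Complex.norm_exp_ofReal_mul_I]
  rw [star_zpow₀, Complex.star_def, ← Complex.inv_eq_conj norm_eq_one, _root_.inv_zpow']

theorem intCast_eq_zero_iff_two_mul_dvd {r : ℕ} (a : ℤ) :
    (a : ZMod (2 * r)) = 0 ↔ (2 * r : ℤ) ∣ a := by
  simpa using ZMod.intCast_zmod_eq_zero_iff_dvd a (2 * r)

theorem neg_eq_sub_intCast_iff {r : ℕ} (x : ZMod (2 * r)) (s : ℤ) :
    -x = x - (2 * s : ℤ) ↔ x = s ∨ x = (s + r : ℤ) := by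
  obtain ⟨a, rfl⟩ := ZMod.intCast_surjective x
  rw [← Int.cast_neg, ← Int.cast_sub]
  simp only [ZMod.intCast_eq_intCast_iff_dvd_sub]
  push_cast
  constructor
  · rintro ⟨c, hc⟩
    have hsub : a - s = r * c := by linarith
    rcases Int.even_or_odd' c with ⟨e, rfl | rfl⟩
    · exact .inl ⟨-e, by linear_combination -hsub⟩
    · exact .inr ⟨-e, by linear_combination -hsub⟩
  · rintro (⟨c, hc⟩ | ⟨c, hc⟩)
    · exact ⟨-2 * c, by linear_combination -2 * hc⟩
    · exact ⟨1 - 2 * c, by linear_combination -2 * hc⟩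

theorem even_of_neg_eq_sub_intCast {r : ℕ} {x : ZMod (2 * r)} {p : ℤ} (h : -x = x - p) :
    Even p := by
  obtain ⟨a, rfl⟩ := ZMod.intCast_surjective x
  rw [← Int.cast_neg, ← Int.cast_sub, ZMod.intCast_eq_intCast_iff_dvd_sub] at h
  obtain ⟨c, hc⟩ := h
  push_cast at hc
  exact ⟨a - r * c, by linarith⟩

section Weyl

variable (r : ℕ) [NeZero r]

theorem stdAddChar_intCast (a : ℤ) :
    ZMod.stdAddChar (a : ZMod (2 * r)) = tconst r ^ (2 * a) := by
  rw [ZMod.stdAddChar_coe, tconst, ← Complex.exp_int_mul]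
  congr 1
  push_cast
  field_simp

/-- The Weyl operator `W(p,q)` on functions on `ℤ/2r`, the quantization of `exp 2πi(px+qy)`. It acts
on row vectors, by `(f W(p,q))(y) = t^(-pq) t^(2qy) f(y - p)`. The phase `t^(-pq)` is not periodic
mod `2r`, so `p` and `q` are integers and not residues. -/
noncomputable def weylMat (p q : ℤ) : Matrix (ZMod (2 * r)) (ZMod (2 * r)) ℂ :=
  Matrix.of fun x y ↦
    if x = y - p then tconst r ^ (-(p * q)) * ZMod.stdAddChar ((q : ZMod (2 * r)) * y) else 0

theorem weylMat_apply_intCast (p q : ℤ) (x : ZMod (2 * r)) (b : ℤ) :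
    weylMat r p q x b = if x = b - p then tconst r ^ (2 * q * b - p * q) else 0 := by
  rw [weylMat, of_apply, ← Int.cast_mul, stdAddChar_intCast, ← zpow_add₀ (tconst_ne_zero r)]
  ring_nf

variable {r}

theorem mul_weylMat_apply {ι : Type*} (M : Matrix ι (ZMod (2 * r)) ℂ) (p q : ℤ) (i : ι)
    (y : ZMod (2 * r)) :
    (M * weylMat r p q) i y =
      tconst r ^ (-(p * q)) * ZMod.stdAddChar ((q : ZMod (2 * r)) * y) * M i (y - p) := by
  simp [Matrix.mul_apply, weylMat, mul_comm]

theorem weylMat_mul_weylMat (p q p' q' : ℤ) :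
    weylMat r p q * weylMat r p' q' =
      tconst r ^ (p * q' - q * p') • weylMat r (p + p') (q + q') := by
  ext x y
  obtain ⟨b, rfl⟩ := ZMod.intCast_surjective y
  have hsub : ((b - p' : ℤ) : ZMod (2 * r)) - p = b - (p + p' : ℤ) := by push_cast; ring
  rw [mul_weylMat_apply, Matrix.smul_apply, ← Int.cast_sub, weylMat_apply_intCast,
    weylMat_apply_intCast, ← Int.cast_mul, stdAddChar_intCast]
  simp only [hsub, mul_ite, mul_zero, smul_eq_mul, ← zpow_add₀ (tconst_ne_zero r)]
  ring_nf

theorem weylMat_neg_apply_neg (p q : ℤ) (x y : ZMod (2 * r)) :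
    weylMat r p q (-x) (-y) = weylMat r (-p) (-q) x y := by
  have h : -x = -y - p ↔ x = y - (-p : ℤ) := by
    rw [neg_eq_iff_eq_neg]; push_cast; ring_nf
  simp [weylMat, h]

theorem conjTranspose_weylMat (p q : ℤ) : (weylMat r p q)ᴴ = weylMat r (-p) (-q) := by
  ext x y
  rw [conjTranspose_apply]
  obtain ⟨a, rfl⟩ := ZMod.intCast_surjective x
  by_cases h : y = a - p
  · subst h
    rw [weylMat_apply_intCast, if_pos rfl, star_tconst_zpow, ← Int.cast_sub, weylMat_apply_intCast,
      if_pos (by push_cast; ring)]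
    ring_nf
  · have h' : (a : ZMod (2 * r)) ≠ y - (-p : ℤ) := fun hx ↦ h (by rw [hx]; push_cast; ring)
    rw [weylMat, weylMat, of_apply, of_apply, if_neg h, if_neg h', star_zero]

theorem trace_weylMat (p q : ℤ) :
    (weylMat r p q).trace =
      if (p : ZMod (2 * r)) = 0 ∧ (q : ZMod (2 * r)) = 0 then (2 * r : ℂ) else 0 := by
  by_cases hp : (p : ZMod (2 * r)) = 0
  · have hsum := AddChar.sum_mulShift (q : ZMod (2 * r)) (ZMod.isPrimitive_stdAddChar (2 * r))
    simp only [mul_comm _ (q : ZMod (2 * r)), ZMod.card] at hsum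
    by_cases hq : (q : ZMod (2 * r)) = 0
    · have hphase : tconst r ^ (-(p * q)) = 1 := by
        obtain ⟨a, rfl⟩ := (intCast_eq_zero_iff_two_mul_dvd _).1 hp
        rw [show -(2 * r * a * q) = 2 * (-(r * a) * q) by ring, ← stdAddChar_intCast]
        simp [hq]
      simp [trace, weylMat, hp, hq, hphase]
    · simp [trace, weylMat, hp, hq, ← Finset.mul_sum, hsum]
  · have hne (x : ZMod (2 * r)) : x ≠ x - p := fun h ↦ hp (sub_eq_self.1 h.symm)
    simp [trace, weylMat, hp, hne]

theorem tconst_zpow_two_mul_self : tconst r ^ (2 * (r : ℤ)) = -1 := by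
  rw [tconst, ← Complex.exp_int_mul, ← Complex.exp_pi_mul_I]
  congr 1
  push_cast
  field [NeZero.ne (r : ℂ)]

theorem intCast_ne_intCast_add_self (s : ℤ) : (s : ZMod (2 * r)) ≠ (s + r : ℤ) := by
  rw [Ne, ZMod.intCast_eq_intCast_iff_dvd_sub, add_sub_cancel_left]
  have hr := NeZero.pos r
  exact_mod_cast Nat.not_dvd_of_pos_of_lt hr (by omega)

theorem sum_weylMat_neg_apply (p q : ℤ) :
    ∑ x, weylMat r p q (-x) x = if Even p ∧ Even q then 2 else 0 := by
  by_cases hp : Even p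
  · obtain ⟨s, rfl⟩ := even_iff_exists_two_mul.1 hp
    have hzero (x : ZMod (2 * r)) (hx : x ≠ s ∧ x ≠ (s + r : ℤ)) :
        weylMat r (2 * s) q (-x) x = 0 := by
      rw [weylMat, of_apply, if_neg (by rwa [neg_eq_sub_intCast_iff, not_or])]
    have hpow : tconst r ^ (2 * q * (s + r) - 2 * s * q) = (-1) ^ q := by
      rw [← tconst_zpow_two_mul_self (r := r), ← _root_.zpow_mul]
      ring_nf
    rw [Fintype.sum_eq_add _ _ (intCast_ne_intCast_add_self s) hzero,
      weylMat_apply_intCast, if_pos ((neg_eq_sub_intCast_iff _ s).2 (.inl rfl)),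
      weylMat_apply_intCast, if_pos ((neg_eq_sub_intCast_iff _ s).2 (.inr rfl)), hpow,
      show 2 * q * s - 2 * s * q = 0 by ring, zpow_zero]
    rcases Int.even_or_odd q with hq | hq
    · rw [if_pos ⟨hp, hq⟩, hq.neg_one_zpow, one_add_one_eq_two]
    · rw [if_neg (by simp [hq]), hq.neg_one_zpow, add_neg_cancel]
  · rw [if_neg (by tauto)]
    refine Finset.sum_eq_zero fun x _ ↦ ?_
    rw [weylMat, of_apply, if_neg (mt even_of_neg_eq_sub_intCast hp)]

end Weyl

section Odd

variable (r : ℕ)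

/-- The residue class of the index of the basis vector `ζ_{k+1}`: the `node r k` are representatives
of the pairs `{x, -x}` with `x ≠ -x` in `ℤ/2r`. -/
def node (k : Fin (r - 1)) : ZMod (2 * r) := ((k + 1 : ℕ) : ZMod (2 * r))

/-- The matrix whose `k`-th row is the odd function on `ℤ/2r` equal to `1` at `node r k`, to `-1` at
`-node r k` and to `0` elsewhere. Multiplication by it identifies row vectors indexed by
`Fin (r - 1)` with the odd functions. -/
def oddMat : Matrix (Fin (r - 1)) (ZMod (2 * r)) ℂ :=
  Matrix.of fun k x ↦ (if x = node r k then 1 else 0) - if x = -node r k then 1 else 0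

variable {r}

theorem node_eq_intCast (k : Fin (r - 1)) : node r k = ((k + 1 : ℤ) : ZMod (2 * r)) := by
  simp [node]

theorem node_injective : Function.Injective (node r) := by
  intro j k h
  rw [node, node, ZMod.natCast_eq_natCast_iff', Nat.mod_eq_of_lt (by omega),
    Nat.mod_eq_of_lt (by omega)] at h
  exact Fin.ext (by omega)

theorem node_ne_neg_node (j k : Fin (r - 1)) : node r j ≠ -node r k := by
  rw [Ne, eq_neg_iff_add_eq_zero, node, node, ← Nat.cast_add, ZMod.natCast_eq_zero_iff]
  exact Nat.not_dvd_of_pos_of_lt (by omega) (by omega)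

theorem eq_neg_self_or_eq_node_or_eq_neg_node [NeZero r] (x : ZMod (2 * r)) :
    x = -x ∨ (∃ k, x = node r k) ∨ ∃ k, x = -node r k := by
  obtain ⟨a, ha, rfl⟩ : ∃ a < 2 * r, (a : ZMod (2 * r)) = x :=
    ⟨x.val, x.val_lt, ZMod.natCast_zmod_val x⟩
  have hneg (b : ℕ) : (a : ZMod (2 * r)) = -b ↔ 2 * r ∣ a + b := by
    rw [eq_neg_iff_add_eq_zero, ← Nat.cast_add, ZMod.natCast_eq_zero_iff]
  rcases lt_trichotomy a r with hlt | rfl | hgt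
  · rcases Nat.eq_zero_or_pos a with rfl | hpos
    · simp
    · exact .inr (.inl ⟨⟨a - 1, by omega⟩, by simp [node, Nat.sub_add_cancel hpos]⟩)
  · exact .inl ((hneg a).2 (by rw [two_mul]))
  · refine .inr (.inr ⟨⟨2 * r - a - 1, by omega⟩, (hneg _).2 ?_⟩)
    exact ⟨1, by simp only; omega⟩

theorem oddMat_apply_node (j k : Fin (r - 1)) : oddMat r j (node r k) = if j = k then 1 else 0 := by
  simp [oddMat, node_injective.eq_iff, node_ne_neg_node, eq_comm]

theorem odd_oddMat (k : Fin (r - 1)) : (oddMat r k).Odd := by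
  intro x
  simp [oddMat, neg_eq_iff_eq_neg]

theorem eps_eq_oddMat (k : Fin (r - 1)) (j : ℤ) : (eps r (k + 1) j : ℂ) = oddMat r k j := by
  have hpos : (2 * r : ℤ) ∣ j - (k + 1) ↔ (j : ZMod (2 * r)) = node r k := by
    rw [← intCast_eq_zero_iff_two_mul_dvd, ← sub_eq_zero (b := node r k)]
    simp [node]
  have hneg : (2 * r : ℤ) ∣ j + (k + 1) ↔ (j : ZMod (2 * r)) = -node r k := by
    rw [← intCast_eq_zero_iff_two_mul_dvd, eq_neg_iff_add_eq_zero]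
    simp [node]
  rw [eps, oddMat, of_apply]
  simp only [hpos, hneg]
  by_cases h : (j : ZMod (2 * r)) = node r k
  · simp [h, node_ne_neg_node]
  · by_cases h' : (j : ZMod (2 * r)) = -node r k <;> simp [h, h', (node_ne_neg_node k k).symm]

theorem Cmat_zero_left (q : ℤ) :
    Cmat r 0 q = diagonal fun k : Fin (r - 1) ↦
      ((2 * Real.cos (q * ((k : ℝ) + 1) * Real.pi / r) : ℝ) : ℂ) := by
  ext k m
  have hcos : (tconst r ^ (2 * q * (m + 1 : ℤ)) + tconst r ^ (-(2 * q * (m + 1 : ℤ))) : ℂ) =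
      (2 * Real.cos (q * ((m : ℝ) + 1) * Real.pi / r) : ℝ) := by
    push_cast
    rw [Complex.two_cos, tconst, ← Complex.exp_int_mul, ← Complex.exp_int_mul]
    congr 2 <;> (push_cast; field_simp)
  rw [Cmat, of_apply, sub_zero, add_zero, eps_eq_oddMat, ← node_eq_intCast, oddMat_apply_node,
    ← add_mul, hcos, diagonal_apply]
  by_cases h : k = m <;> simp [h]

theorem Cmat_zero_zero : Cmat r 0 0 = 2 := by
  rw [Cmat_zero_left, ← diagonal_ofNat]
  simp

variable [NeZero r]

theorem sum_node_mul_oddMat {f : ZMod (2 * r) → ℂ} (hf : f.Odd) (x : ZMod (2 * r)) :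
    ∑ k, f (node r k) * oddMat r k x = f x := by
  rcases eq_neg_self_or_eq_node_or_eq_neg_node x with hx | ⟨k, rfl⟩ | ⟨k, rfl⟩
  · have eq_zero {g : ZMod (2 * r) → ℂ} (hg : g.Odd) : g x = 0 :=
      self_eq_neg.1 (by rw [← hg x, ← hx])
    simp [eq_zero hf, eq_zero (odd_oddMat _)]
  · simp [oddMat_apply_node]
  · simp [hf _, odd_oddMat _ _, oddMat_apply_node]

theorem mul_conjTranspose_oddMat_apply {ι : Type*} (M : Matrix ι (ZMod (2 * r)) ℂ) (i : ι)
    (k : Fin (r - 1)) : (M * (oddMat r)ᴴ) i k = M i (node r k) - M i (-node r k) := by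
  simp [Matrix.mul_apply, oddMat, mul_sub, Finset.sum_sub_distrib, apply_ite (starRingEnd ℂ)]

theorem oddMat_mul_conjTranspose : oddMat r * (oddMat r)ᴴ = (2 : ℂ) • 1 := by
  ext j k
  rw [mul_conjTranspose_oddMat_apply, odd_oddMat, sub_neg_eq_add, ← two_mul, oddMat_apply_node,
    Matrix.smul_apply, one_apply, smul_eq_mul]

theorem conjTranspose_oddMat_mul (x y : ZMod (2 * r)) :
    ((oddMat r)ᴴ * oddMat r) x y = (if x = y then 1 else 0) - if x = -y then 1 else 0 := by
  have hf : (fun y ↦ (if x = y then 1 else 0) - if x = -y then 1 else 0 : _ → ℂ).Odd :=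
    fun y ↦ by simp
  rw [← sum_node_mul_oddMat hf y, Matrix.mul_apply]
  refine Finset.sum_congr rfl fun k _ ↦ ?_
  simp [oddMat, apply_ite (starRingEnd ℂ)]

theorem trace_oddMat_mul_mul_conjTranspose (S : Matrix (ZMod (2 * r)) (ZMod (2 * r)) ℂ) :
    (oddMat r * S * (oddMat r)ᴴ).trace = S.trace - ∑ x, S (-x) x := by
  have hneg : ∑ x, S x (-x) = ∑ x, S (-x) x :=
    Fintype.sum_equiv (Equiv.neg _) _ _ fun x ↦ by simp
  rw [Matrix.mul_assoc, Matrix.trace_mul_comm, Matrix.mul_assoc, ← hneg]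
  simp_rw [trace, diag_apply, Matrix.mul_apply (M := S), conjTranspose_oddMat_mul]
  simp [mul_sub, Finset.sum_sub_distrib]

theorem eq_of_mul_oddMat_eq {m : Type*} {A A' : Matrix m (Fin (r - 1)) ℂ}
    (h : A * oddMat r = A' * oddMat r) : A = A' := by
  have h' := congrArg (· * (oddMat r)ᴴ) h
  simp only [Matrix.mul_assoc, oddMat_mul_conjTranspose] at h'
  simpa using h'

end Odd

theorem dvd_mul_gcd_gcd_iff {m a : ℤ} (hm : m ∣ a) (n p q : ℤ) :
    m ∣ n * Int.gcd p (Int.gcd q a) ↔ m ∣ n * p ∧ m ∣ n * q := by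
  have dvd_iff (x y : ℤ) : m ∣ n * Int.gcd x y ↔ m ∣ n * x ∧ m ∣ n * y := by
    rw [← Int.dvd_coe_gcd_iff, Int.gcd_mul_left, Nat.cast_mul, Int.natCast_natAbs,
      ← dvd_abs m (n * _), abs_mul, Nat.abs_cast]
  rw [dvd_iff, dvd_iff, and_iff_left (hm.mul_left n)]

section Cosine

variable {r : ℕ} [NeZero r]

/-- The quantization of `2 cos 2π(px+qy)` on all functions on `ℤ/2r`, of which `C(p,q)` is the
restriction to the odd functions. -/
noncomputable def cosMat (r : ℕ) [NeZero r] (p q : ℤ) : Matrix (ZMod (2 * r)) (ZMod (2 * r)) ℂ :=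
  weylMat r p q + weylMat r (-p) (-q)

theorem cosMat_mul_cosMat (p q p' q' : ℤ) :
    cosMat r p q * cosMat r p' q' =
      tconst r ^ (p * q' - q * p') • cosMat r (p + p') (q + q') +
        tconst r ^ (-(p * q' - q * p')) • cosMat r (p - p') (q - q') := by
  simp only [cosMat, add_mul, mul_add, weylMat_mul_weylMat, smul_add]
  ring_nf
  abel

theorem isHermitian_cosMat (p q : ℤ) : (cosMat r p q).IsHermitian := by
  rw [IsHermitian, cosMat, conjTranspose_add, conjTranspose_weylMat, conjTranspose_weylMat,
    neg_neg, neg_neg, add_comm]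

theorem odd_oddMat_mul_cosMat (p q : ℤ) (k : Fin (r - 1)) : ((oddMat r * cosMat r p q) k).Odd := by
  intro y
  rw [Matrix.mul_apply, Matrix.mul_apply, ← Finset.sum_neg_distrib]
  refine Fintype.sum_equiv (Equiv.neg _) _ _ fun x ↦ ?_
  rw [← neg_neg x, cosMat, Matrix.add_apply, weylMat_neg_apply_neg, weylMat_neg_apply_neg,
    odd_oddMat, Equiv.neg_apply, neg_neg, neg_neg, neg_neg, Matrix.add_apply]
  ring

theorem oddMat_mul_cosMat_apply_node (p q : ℤ) (k m : Fin (r - 1)) :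
    (oddMat r * cosMat r p q) k (node r m) = Cmat r p q k m := by
  rw [cosMat, Matrix.mul_add, Matrix.add_apply, mul_weylMat_apply, mul_weylMat_apply,
    node_eq_intCast, ← Int.cast_sub, ← Int.cast_sub, ← eps_eq_oddMat, ← eps_eq_oddMat,
    ← Int.cast_mul, ← Int.cast_mul, stdAddChar_intCast, stdAddChar_intCast, Cmat, of_apply]
  ring_nf

theorem Cmat_mul_oddMat (p q : ℤ) : Cmat r p q * oddMat r = oddMat r * cosMat r p q := by
  ext k y
  rw [← sum_node_mul_oddMat (odd_oddMat_mul_cosMat p q k) y, Matrix.mul_apply]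
  simp only [oddMat_mul_cosMat_apply_node]

theorem oddMat_mul_cosMat_mul_conjTranspose (p q : ℤ) :
    oddMat r * cosMat r p q * (oddMat r)ᴴ = (2 : ℂ) • Cmat r p q := by
  rw [← Cmat_mul_oddMat, Matrix.mul_assoc, oddMat_mul_conjTranspose, mul_smul_one]

theorem Cmat_mul_Cmat (p q p' q' : ℤ) :
    Cmat r p q * Cmat r p' q' =
      tconst r ^ (p * q' - q * p') • Cmat r (p + p') (q + q') +
        tconst r ^ (-(p * q' - q * p')) • Cmat r (p - p') (q - q') := by
  refine eq_of_mul_oddMat_eq ?_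
  rw [Matrix.mul_assoc, Cmat_mul_oddMat, ← Matrix.mul_assoc, Cmat_mul_oddMat, Matrix.mul_assoc,
    cosMat_mul_cosMat]
  simp only [Matrix.add_mul, Matrix.mul_add, Matrix.smul_mul, Matrix.mul_smul, Cmat_mul_oddMat]

theorem isHermitian_Cmat (p q : ℤ) : (Cmat r p q).IsHermitian := by
  have h := (isHermitian_mul_mul_conjTranspose (oddMat r) (isHermitian_cosMat p q)).eq
  rw [oddMat_mul_cosMat_mul_conjTranspose, conjTranspose_smul, star_ofNat] at h
  exact smul_right_injective _ two_ne_zero h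

theorem aeval_Cmat_chebyshev_C (p q n : ℤ) :
    Polynomial.aeval (Cmat r p q) (Polynomial.Chebyshev.C ℂ n) = Cmat r (n * p) (n * q) := by
  have hmul (n : ℤ) : Cmat r (n * p) (n * q) * Cmat r p q =
      Cmat r ((n + 1) * p) ((n + 1) * q) + Cmat r ((n - 1) * p) ((n - 1) * q) := by
    rw [Cmat_mul_Cmat, show n * p * q - n * q * p = 0 by ring, neg_zero, zpow_zero, one_smul,
      one_smul]
    ring_nf
  induction n using Polynomial.Chebyshev.induct with
  | zero => simp [Cmat_zero_zero, map_ofNat]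
  | one => simp
  | add_two n ih1 ih0 =>
    rw [Polynomial.Chebyshev.C_add_two, mul_comm, map_sub, map_mul, Polynomial.aeval_X, ih1,
      ih0, hmul, add_sub_cancel_right, add_sub_cancel_right, add_assoc, one_add_one_eq_two]
  | neg_add_one n ih0 ih1 =>
    rw [Polynomial.Chebyshev.C_sub_one, mul_comm, map_sub, map_mul, Polynomial.aeval_X, ih1,
      ih0, hmul, add_sub_cancel_left]

theorem trace_Cmat (p q : ℤ) :
    (Cmat r p q).trace =
      (if 2 * (r : ℤ) ∣ p ∧ 2 * (r : ℤ) ∣ q then (2 * r : ℂ) else 0) -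
        if 2 ∣ p ∧ 2 ∣ q then 2 else 0 := by
  have h := trace_oddMat_mul_mul_conjTranspose (cosMat r p q)
  rw [oddMat_mul_cosMat_mul_conjTranspose] at h
  refine mul_left_cancel₀ two_ne_zero ((trace_smul _ _).symm.trans (h.trans ?_))
  simp only [cosMat, trace_add, trace_weylMat, Matrix.add_apply, Finset.sum_add_distrib,
    sum_weylMat_neg_apply, intCast_eq_zero_iff_two_mul_dvd, dvd_neg, even_iff_two_dvd]
  ring

theorem trace_Cmat_mul (p q n : ℤ) :
    (Cmat r (n * p) (n * q)).trace =
      (Cmat r (n * 0) (n * Int.gcd p (Int.gcd q (2 * (r : ℤ))))).trace := by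
  simp only [trace_Cmat, mul_zero, dvd_zero, true_and, dvd_mul_gcd_gcd_iff (dvd_refl _),
    dvd_mul_gcd_gcd_iff (dvd_mul_right 2 (r : ℤ))]

theorem trace_aeval_Cmat (p q : ℤ) (P : Polynomial ℂ) :
    (Polynomial.aeval (Cmat r p q) P).trace =
      (Polynomial.aeval (Cmat r 0 (Int.gcd p (Int.gcd q (2 * (r : ℤ))))) P).trace := by
  have : Invertible (2 : ℂ) := invertibleOfNonzero two_ne_zero
  refine trace_aeval_eq_of_chebyshev_C (fun n ↦ ?_) P
  rw [aeval_Cmat_chebyshev_C, aeval_Cmat_chebyshev_C, trace_Cmat_mul]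

end Cosine

/-- The characteristic polynomial of `C(p,q)` is `∏_{k=1}^{r−1} (λ − 2 cos(d·kπ/r))`,
where `d = gcd(p, q, 2r)`. -/
theorem charpoly_Cmat (r : ℕ) (hr : 2 ≤ r) (p q : ℤ) :
    (Cmat r p q).charpoly =
      ∏ k : Fin (r - 1),
        (Polynomial.X - Polynomial.C
          (((2 * Real.cos ((Int.gcd p (Int.gcd q (2 * (r : ℤ))) : ℝ) * ((k : ℝ) + 1) *
            Real.pi / r) : ℝ) : ℂ))) := by
  have : NeZero r := ⟨by omega⟩
  rw [charpoly_eq_of_trace_aeval_eq (isHermitian_Cmat p q) (isHermitian_Cmat 0 _)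
    (trace_aeval_Cmat p q), Cmat_zero_left, charpoly_diagonal]
  simp only [Int.cast_natCast]
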